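/- Let (R,m) be a non-Gorenstein Noetherian local ring with m³ = (0), m² ≠ (0), residue field k, and type r, and let M be a nonfree indecomposable finitely generated R-module of G-dimension zero. If b is the minimal number of generators of M, then dim_k mM = rb and the length of M is b(1+r). -/

import Mathlib

open CategoryTheory

noncomputable abbrev ExtGrp (R : Type) [CommRing R] (M N : Type) [AddCommGroup M] [Module R M]
    [AddCommGroup N] [Module R N] (i : ℕ) : Type :=
  ((Ext R (ModuleCat R) i).obj (Opposite.op (ModuleCat.of R M))).obj (ModuleCat.of R N)

/-- G-dimension zero. -/
def GDimZero (R : Type) [CommRing R] (M : Type) [AddCommGroup M] [Module R M] : Prop :=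
  Function.Bijective (Module.Dual.eval R M) ∧
  (∀ i : ℕ, 0 < i → Subsingleton (ExtGrp R M R i)) ∧
  (∀ i : ℕ, 0 < i → Subsingleton (ExtGrp R (Module.Dual R M) R i))

/-- finite self-injective dimension -/
def HasFiniteSelfInjDim (R : Type) [CommRing R] : Prop :=
  ∃ n : ℕ, ∀ (N : ModuleCat R) (i : ℕ), n < i →
    Subsingleton (((Ext R (ModuleCat R) i).obj (Opposite.op N)).obj (ModuleCat.of R R))

/-- Gorenstein local ring -/
def IsGorensteinLocalRing (R : Type) [CommRing R] : Prop :=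
  IsNoetherianRing R ∧ IsLocalRing R ∧ HasFiniteSelfInjDim R

/-- length of a module, as Krull dimension of its submodule lattice -/
noncomputable def mlength (R : Type) [CommRing R] (M : Type) [AddCommGroup M] [Module R M] :
    WithBot ℕ∞ :=
  Order.krullDim (Submodule R M)

/-- An indecomposable (nonzero) module: it is not a direct sum of two proper submodules. -/
def IsIndecomposableModule (R : Type) [CommRing R] (M : Type) [AddCommGroup M]
    [Module R M] : Prop :=
  (⊥ : Submodule R M) ≠ ⊤ ∧
    ∀ N₁ N₂ : Submodule R M, IsCompl N₁ N₂ → N₁ = ⊥ ∨ N₂ = ⊥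

/-- the type of a local ring: length of Hom(k, R) -/
noncomputable def typeLen (R : Type) [CommRing R] [IsLocalRing R] : WithBot ℕ∞ :=
  mlength R ((R ⧸ IsLocalRing.maximalIdeal R) →ₗ[R] R)


lemma ext_succ_iff (R : Type) [CommRing R] (X Y : ModuleCat R) (P : ProjectiveResolution X)
    (n : ℕ) :
    Subsingleton (((Ext R (ModuleCat R) (n+1)).obj (Opposite.op X)).obj Y) ↔
    ∀ f : P.complex.X (n+1) ⟶ Y, P.complex.d (n+2) (n+1) ≫ f = 0 →
      ∃ g : P.complex.X n ⟶ Y, P.complex.d (n+1) n ≫ g = f := by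
  rw [← ModuleCat.isZero_iff_subsingleton, (P.isoExt (R := R) (n+1) Y).isZero_iff,
    ← HomologicalComplex.exactAt_iff_isZero_homology,
    HomologicalComplex.exactAt_iff' _ n (n+1) (n+2) (by simp) (by simp),
    ShortComplex.moduleCat_exact_iff]
  rfl

lemma extend_of_ext (R : Type) [CommRing R] (X Y : Type) [AddCommGroup X] [Module R X]
    [AddCommGroup Y] [Module R Y]
    (h : Subsingleton (((Ext R (ModuleCat R) 1).obj
      (Opposite.op (ModuleCat.of R X))).obj (ModuleCat.of R Y)))
    (A : Type) [AddCommGroup A] [Module R A] (p : A →ₗ[R] X) (hp : Function.Surjective p)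
    (f : LinearMap.ker p →ₗ[R] Y) :
    ∃ g : A →ₗ[R] Y, ∀ x : LinearMap.ker p, g x = f x := by
  let P := projectiveResolution (ModuleCat.of R X)
  rw [ext_succ_iff R _ _ P] at h
  have : Epi (ModuleCat.ofHom p) := (ModuleCat.epi_iff_surjective _).2 hp
  let π : P.complex.X 0 ⟶ ModuleCat.of R X := P.π.f 0
  let s : P.complex.X 0 ⟶ ModuleCat.of R A := Projective.factorThru π (ModuleCat.ofHom p)
  have hs : s ≫ ModuleCat.ofHom p = π := Projective.factorThru_comp _ _
  have hs' : ∀ x, p (s x) = π x := fun x => by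
    rw [← hs]; rfl
  have hd0 : ∀ y, π (P.complex.d 1 0 y) = 0 := fun y => by
    have := P.complex_d_comp_π_f_zero
    exact congrArg (fun t => t y) this
  have hπ : Function.Surjective π := by
    have : Epi π := inferInstanceAs (Epi (P.π.f 0))
    exact (ModuleCat.epi_iff_surjective _).1 this
  let c : P.complex.X 1 →ₗ[R] LinearMap.ker p :=
    ((P.complex.d 1 0 ≫ s).hom).codRestrict _ (fun y => by
      show p (s (P.complex.d 1 0 y)) = 0
      rw [hs', hd0])
  have hc : ∀ y, (c y : A) = s (P.complex.d 1 0 y) := fun y => rfl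
  obtain ⟨g, hg⟩ := h (ModuleCat.ofHom (f ∘ₗ c)) (by
    ext y
    show f (c (P.complex.d 2 1 y)) = 0
    have : c (P.complex.d 2 1 y) = 0 := by
      ext
      rw [hc]
      have := congrArg (fun t => t y) (P.complex.d_comp_d 2 1 0)
      have h2 : P.complex.d 1 0 (P.complex.d 2 1 y) = 0 := this
      rw [h2]; simp
    rw [this]; simp)
  have hg' : ∀ y, g (P.complex.d 1 0 y) = f (c y) := fun y => congrArg (fun t => t y) hg
  have hex : ∀ z, π z = 0 → ∃ y, P.complex.d 1 0 y = z := by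
    have := P.exact₀
    rw [ShortComplex.moduleCat_exact_iff] at this
    exact this
  -- map ker p × P0 → A
  let T : (LinearMap.ker p × P.complex.X 0) →ₗ[R] A :=
    LinearMap.coprod (LinearMap.ker p).subtype s.hom
  let U : (LinearMap.ker p × P.complex.X 0) →ₗ[R] Y := LinearMap.coprod f g.hom
  have hT : Function.Surjective T := by
    intro a
    obtain ⟨z, hz⟩ := hπ (p a)
    refine ⟨(⟨a - s z, ?_⟩, z), ?_⟩
    · simp [hs', hz]
    · show a - s z + s z = a
      simp
  have hTU : LinearMap.ker T ≤ LinearMap.ker U := by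
    rintro ⟨⟨a, ha⟩, z⟩ h0
    have h0 : a + s z = 0 := h0
    have h1 : π z = 0 := by
      have := congrArg p h0
      rw [map_add, hs', LinearMap.mem_ker.1 ha, zero_add, map_zero] at this
      exact this
    obtain ⟨y, rfl⟩ := hex z h1
    show f ⟨a, ha⟩ + g (P.complex.d 1 0 y) = 0
    rw [hg', ← map_add]
    convert map_zero f
    ext
    exact h0
  let e := T.quotKerEquivOfSurjective hT
  refine ⟨((LinearMap.ker T).liftQ U hTU) ∘ₗ e.symm.toLinearMap, fun x => ?_⟩
  have : e.symm (x : A) = (LinearMap.ker T).mkQ (x, 0) := by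
    rw [LinearEquiv.symm_apply_eq]
    show _ = T (x, 0)
    simp [T]
  show (LinearMap.ker T).liftQ U hTU (e.symm (x:A)) = _
  rw [this]
  simp [U]

lemma ext_zero_of_injective (R : Type) [CommRing R] (h : Module.Injective R R) (X : ModuleCat R)
    (n : ℕ) (hn : 0 < n) :
    Subsingleton (((Ext R (ModuleCat R) n).obj (Opposite.op X)).obj (ModuleCat.of R R)) := by
  obtain ⟨n, rfl⟩ : ∃ m, n = m + 1 := ⟨n - 1, by omega⟩
  let P := projectiveResolution X
  rw [ext_succ_iff R _ _ P]
  intro f hf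
  have hf' : ∀ y, f (P.complex.d (n+2) (n+1) y) = 0 := fun y => congrArg (fun t => t y) hf
  have hex : ∀ z, P.complex.d (n+1) n z = 0 → ∃ y, P.complex.d (n+2) (n+1) y = z := by
    have := P.exact_succ n
    rw [ShortComplex.moduleCat_exact_iff] at this
    exact this
  let D := (P.complex.d (n+1) n).hom
  have hk : LinearMap.ker D ≤ LinearMap.ker f.hom := by
    intro z hz
    obtain ⟨y, rfl⟩ := hex z hz
    exact hf' y
  obtain ⟨g, hg⟩ := h.out ((LinearMap.ker D).liftQ D le_rfl)
    (LinearMap.ker_eq_bot.1 (Submodule.ker_liftQ_eq_bot _ _ _ le_rfl))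
    ((LinearMap.ker D).liftQ f.hom hk)
  refine ⟨ModuleCat.ofHom g, ?_⟩
  ext z
  exact hg ((LinearMap.ker D).mkQ z)

lemma baer_of_max (R : Type) [CommRing R] [IsNoetherianRing R] [IsLocalRing R]
    (hm3 : (IsLocalRing.maximalIdeal R) ^ 3 = ⊥)
    (h : ∀ f : IsLocalRing.maximalIdeal R →ₗ[R] R, ∃ g : R →ₗ[R] R,
      ∀ x : IsLocalRing.maximalIdeal R, g x = f x) : Module.Baer R R := by
  set m := IsLocalRing.maximalIdeal R
  intro I
  induction I using WellFoundedGT.induction with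
  | ind I ih =>
  intro g
  by_cases hI : I = ⊤
  · subst hI
    exact ⟨g ∘ₗ (LinearMap.id.codRestrict ⊤ (by simp)), fun x _ => rfl⟩
  have : ∃ x, x ∉ I ∧ ∀ a ∈ m, a * x ∈ I := by
    by_contra! hcon
    have step : ∀ x, x ∉ I → ∃ a ∈ m, a * x ∉ I := hcon
    obtain ⟨a, ha, h1⟩ := step 1 (fun h => hI ((Ideal.eq_top_iff_one _).2 h))
    obtain ⟨b, hb, h2⟩ := step _ h1
    obtain ⟨c, hc, h3⟩ := step _ h2
    apply h3
    have : c * (b * (a * 1)) ∈ m ^ 3 := by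
      rw [mul_one, pow_succ', pow_two]
      exact Ideal.mul_mem_mul hc (Ideal.mul_mem_mul hb ha)
    rw [hm3, Ideal.mem_bot] at this
    rw [this]; simp
  obtain ⟨x, hx, hmx⟩ := this
  let mx : m →ₗ[R] I := ((LinearMap.mulRight R x) ∘ₗ m.subtype).codRestrict I (fun a => hmx a a.2)
  obtain ⟨w, hw⟩ := h (g ∘ₗ mx)
  have hw' : ∀ a (ha : a ∈ m), w a = g ⟨a * x, hmx a ha⟩ := fun a ha => hw ⟨a, ha⟩
  let J : Ideal R := I ⊔ Ideal.span {x}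
  have hIJ : I < J := by
    refine lt_of_le_of_ne le_sup_left (fun h => hx ?_)
    rw [h]
    exact (le_sup_right : _ ≤ J) (Ideal.subset_span rfl)
  let T : (I × R) →ₗ[R] J := (LinearMap.coprod I.subtype (LinearMap.mulRight R x)).codRestrict J
    (by
      rintro ⟨i, a⟩
      exact add_mem ((le_sup_left : _ ≤ J) i.2) ((le_sup_right : _ ≤ J)
        (Ideal.mul_mem_left _ _ (Ideal.subset_span rfl))))
  let U : (I × R) →ₗ[R] R := LinearMap.coprod g w
  have hT : Function.Surjective T := by
    rintro ⟨y, hy⟩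
    obtain ⟨i, hi, z, hz, rfl⟩ := Submodule.mem_sup.1 hy
    obtain ⟨a, rfl⟩ := Ideal.mem_span_singleton'.1 hz
    exact ⟨(⟨i, hi⟩, a), rfl⟩
  have hTU : LinearMap.ker T ≤ LinearMap.ker U := by
    rintro ⟨⟨i, hi⟩, a⟩ h0
    have h0 : i + a * x = 0 := congrArg Subtype.val h0
    have ha : a ∈ m := by
      by_contra hu
      have hu : IsUnit a := by simpa [m] using hu
      apply hx
      have : a * x ∈ I := by
        rw [← neg_eq_of_add_eq_zero_right h0]; exact neg_mem hi
      exact (Ideal.unit_mul_mem_iff_mem I hu).1 this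
    show g ⟨i, hi⟩ + w a = 0
    rw [hw' a ha, ← map_add]
    convert map_zero g
    ext
    exact h0
  let e := T.quotKerEquivOfSurjective hT
  obtain ⟨g', hg'⟩ := ih J hIJ (((LinearMap.ker T).liftQ U hTU) ∘ₗ e.symm.toLinearMap)
  refine ⟨g', fun y hy => ?_⟩
  rw [hg' y (hIJ.le hy)]
  have : e.symm ⟨y, hIJ.le hy⟩ = (LinearMap.ker T).mkQ (⟨y, hy⟩, 0) := by
    rw [LinearEquiv.symm_apply_eq]
    show _ = T (⟨y, hy⟩, 0)
    ext
    simp [T]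
  show (LinearMap.ker T).liftQ U hTU (e.symm _) = _
  rw [this]
  simp [U]

def ExtendProp (R : Type) [CommRing R] (X : Type) [AddCommGroup X] [Module R X] : Prop :=
  ∀ (A : Type) [AddCommGroup A] [Module R A] (p : A →ₗ[R] X), Function.Surjective p →
    ∀ f : LinearMap.ker p →ₗ[R] R, ∃ g : A →ₗ[R] R, ∀ x : LinearMap.ker p, g x = f x

lemma kvec (R : Type) [CommRing R] [IsLocalRing R] (V : Type) [AddCommGroup V] [Module R V]
    [Module.Finite R V] (hV : ∀ a ∈ IsLocalRing.maximalIdeal R, ∀ v : V, a • v = 0) :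
    ∃ n : ℕ, Nonempty (V ≃ₗ[R] (Fin n → R ⧸ IsLocalRing.maximalIdeal R)) := by
  have ht : Module.IsTorsionBySet R V (IsLocalRing.maximalIdeal R : Set R) := by
    intro v a
    exact hV a.1 a.2 v
  let _ : Field (R ⧸ IsLocalRing.maximalIdeal R) := Ideal.Quotient.field _
  let _ : Module (R ⧸ IsLocalRing.maximalIdeal R) V := ht.module
  have : IsScalarTower R (R ⧸ IsLocalRing.maximalIdeal R) V := ht.isScalarTower
  have : Module.Finite (R ⧸ IsLocalRing.maximalIdeal R) V :=
    Module.Finite.of_restrictScalars_finite R _ _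
  exact ⟨_, ⟨(Module.finBasis (R ⧸ IsLocalRing.maximalIdeal R) V).equivFun.restrictScalars R⟩⟩

lemma length_k (R : Type) [CommRing R] [IsLocalRing R] (n : ℕ) :
    Module.length R (Fin n → R ⧸ IsLocalRing.maximalIdeal R) = n := by
  have : IsSimpleModule R (R ⧸ IsLocalRing.maximalIdeal R) :=
    isSimpleModule_iff_isCoatom.2 (Ideal.isMaximal_def.1 inferInstance)
  rw [Module.length_pi_of_fintype]
  simp [Module.length_eq_one]

lemma length_pi_hom (R : Type) [CommRing R] (n : ℕ) (W : Type) [AddCommGroup W] [Module R W] :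
    Module.length R ((Fin n → W) →ₗ[R] R) = n * Module.length R (W →ₗ[R] R) := by
  have e : (Fin n → (W →ₗ[R] R)) ≃ₗ[R] ((Fin n → W) →ₗ[R] R) := LinearMap.lsum R (fun _ => W) R
  rw [← e.length_eq, Module.length_pi_of_fintype]
  simp

lemma length_hom_k (R : Type) [CommRing R] [IsLocalRing R] (V : Type) [AddCommGroup V] [Module R V]
    [Module.Finite R V] (hV : ∀ a ∈ IsLocalRing.maximalIdeal R, ∀ v : V, a • v = 0) :
    Module.length R (V →ₗ[R] R) =
      Module.length R V * Module.length R ((R ⧸ IsLocalRing.maximalIdeal R) →ₗ[R] R) := by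
  obtain ⟨n, ⟨e⟩⟩ := kvec R V hV
  rw [e.length_eq, length_k, ← length_pi_hom]
  exact (e.congrLeft R R).length_eq

lemma max_extend_of_retract (R : Type) [CommRing R] [IsLocalRing R] (X : Type)
    [AddCommGroup X] [Module R X] [Module.Finite R X] (hE : ExtendProp R X)
    (x : X) (hx : ∀ a ∈ IsLocalRing.maximalIdeal R, a • x = 0)
    (hx' : x ∉ IsLocalRing.maximalIdeal R • (⊤ : Submodule R X)) :
    ∀ f : IsLocalRing.maximalIdeal R →ₗ[R] R, ∃ g : R →ₗ[R] R,
      ∀ x : IsLocalRing.maximalIdeal R, g x = f x := by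
  set m := IsLocalRing.maximalIdeal R with hm
  intro f
  obtain ⟨n, ⟨e⟩⟩ := kvec R (X ⧸ (m • (⊤ : Submodule R X))) (by
    intro a ha v
    obtain ⟨v, rfl⟩ := Submodule.mkQ_surjective _ v
    rw [← map_smul, Submodule.mkQ_apply, Submodule.Quotient.mk_eq_zero]
    exact Submodule.smul_mem_smul ha trivial)
  have h1 : e (Submodule.mkQ _ x) ≠ 0 := by
    simpa [Submodule.Quotient.mk_eq_zero] using hx'
  obtain ⟨i, hi⟩ := Function.ne_iff.1 h1
  let p : X →ₗ[R] R ⧸ m := LinearMap.proj i ∘ₗ e.toLinearMap ∘ₗ Submodule.mkQ _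
  have hp : p x ≠ 0 := hi
  let _ : Field (R ⧸ m) := Ideal.Quotient.field _
  obtain ⟨a, ha⟩ := Ideal.Quotient.mk_surjective (p x)⁻¹
  let y := a • x
  have hy : p y = 1 := by
    show p (a • x) = 1
    rw [map_smul, Algebra.smul_def, Ideal.Quotient.algebraMap_eq, ha, inv_mul_cancel₀ hp]
  have hmy : ∀ b ∈ m, b • y = 0 := fun b hb => by
    show b • a • x = 0
    rw [smul_comm, hx b hb, smul_zero]
  let S : Submodule R (X × R) :=
    LinearMap.ker (p ∘ₗ LinearMap.fst R X R - (Submodule.mkQ m) ∘ₗ LinearMap.snd R X R)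
  have hS : ∀ z t, (z, t) ∈ S ↔ p z = Ideal.Quotient.mk m t := fun z t => by
    simp only [S, LinearMap.mem_ker, LinearMap.sub_apply, sub_eq_zero]
    rfl
  let q : S →ₗ[R] X := LinearMap.fst R X R ∘ₗ S.subtype
  have hq : Function.Surjective q := by
    intro z
    obtain ⟨t, ht⟩ := Ideal.Quotient.mk_surjective (p z)
    exact ⟨⟨(z, t), (hS _ _).2 ht.symm⟩, rfl⟩
  let c : LinearMap.ker q →ₗ[R] m :=
    (LinearMap.snd R X R ∘ₗ S.subtype ∘ₗ (LinearMap.ker q).subtype).codRestrict m (by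
      rintro ⟨⟨⟨z, t⟩, h⟩, h0⟩
      have h0 : z = 0 := h0
      subst h0
      rw [hS, map_zero] at h
      exact Ideal.Quotient.eq_zero_iff_mem.1 h.symm)
  obtain ⟨g, hg⟩ := hE S q hq (f ∘ₗ c)
  let s : R →ₗ[R] S := (LinearMap.prod (LinearMap.toSpanSingleton R X y) LinearMap.id).codRestrict S
    (by
      intro t
      show (t • y, t) ∈ S
      rw [hS, map_smul, hy, Algebra.smul_def, mul_one]; rfl)
  refine ⟨g ∘ₗ s, ?_⟩
  rintro ⟨t, ht⟩
  have hk : s t ∈ LinearMap.ker q := hmy t ht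
  exact hg ⟨s t, hk⟩

lemma length_restrict (R : Type) [CommRing R] (A B : Type) [AddCommGroup A] [Module R A]
    [AddCommGroup B] [Module R B] (p : A →ₗ[R] B) (hp : Function.Surjective p)
    (h : ∀ f : LinearMap.ker p →ₗ[R] R, ∃ g : A →ₗ[R] R, ∀ x : LinearMap.ker p, g x = f x) :
    Module.length R (A →ₗ[R] R) =
      Module.length R (B →ₗ[R] R) + Module.length R (LinearMap.ker p →ₗ[R] R) := by
  refine Module.length_eq_add_of_exact (LinearMap.lcomp R R p)
    (LinearMap.lcomp R R (LinearMap.ker p).subtype) ?_ ?_ ?_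
  · intro f g hfg
    ext b
    obtain ⟨a, rfl⟩ := hp b
    exact LinearMap.congr_fun hfg a
  · intro f
    obtain ⟨g, hg⟩ := h f
    exact ⟨g, LinearMap.ext hg⟩
  · intro f
    constructor
    · intro hf
      have hle : LinearMap.ker p ≤ LinearMap.ker f := fun x hx =>
        LinearMap.congr_fun hf ⟨x, hx⟩
      refine ⟨((LinearMap.ker p).liftQ f hle) ∘ₗ (p.quotKerEquivOfSurjective hp).symm.toLinearMap,
        ?_⟩
      ext a
      have : (p.quotKerEquivOfSurjective hp).symm (p a) = (LinearMap.ker p).mkQ a := by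
        rw [LinearEquiv.symm_apply_eq]; rfl
      simp [this]
    · rintro ⟨g, rfl⟩
      ext x
      have : p x = 0 := x.2
      simp [this]

/-- minimal free cover -/
lemma min_cover (R : Type) [CommRing R] [IsNoetherianRing R] [IsLocalRing R] (M : Type)
    [AddCommGroup M] [Module R M] [Module.Finite R M] :
    ∃ (b : ℕ) (φ : (Fin b → R) →ₗ[R] M),
      Module.length R (M ⧸ (IsLocalRing.maximalIdeal R • (⊤ : Submodule R M))) = b ∧
      Function.Surjective φ ∧
      ∀ v, φ v ∈ IsLocalRing.maximalIdeal R • (⊤ : Submodule R M) ↔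
        ∀ i, v i ∈ IsLocalRing.maximalIdeal R := by
  set m := IsLocalRing.maximalIdeal R with hm
  obtain ⟨n, ⟨e⟩⟩ := kvec R (M ⧸ (m • (⊤ : Submodule R M))) (by
    intro a ha v
    obtain ⟨v, rfl⟩ := Submodule.mkQ_surjective _ v
    rw [← map_smul, Submodule.mkQ_apply, Submodule.Quotient.mk_eq_zero]
    exact Submodule.smul_mem_smul ha trivial)
  let π : (Fin n → R) →ₗ[R] (Fin n → R ⧸ m) := LinearMap.compLeft (Submodule.mkQ m) (Fin n)
  have hπ : Function.Surjective π := by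
    intro w
    choose v hv using fun i => Ideal.Quotient.mk_surjective (w i)
    exact ⟨v, funext hv⟩
  obtain ⟨φ, hφ⟩ := Module.projective_lifting_property (Submodule.mkQ (m • (⊤ : Submodule R M)))
    (e.symm.toLinearMap ∘ₗ π) (Submodule.mkQ_surjective _)
  have hφ' : ∀ v, Submodule.mkQ _ (φ v) = e.symm (π v) := fun v => LinearMap.congr_fun hφ v
  refine ⟨n, φ, ?_, ?_, ?_⟩
  · rw [e.length_eq, length_k]
  · rw [← LinearMap.range_eq_top]
    refine top_le_iff.1 (Submodule.le_of_le_smul_of_le_jacobson_bot (I := m) Module.Finite.fg_top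
      (IsLocalRing.maximalIdeal_le_jacobson _) ?_)
    intro x _
    obtain ⟨v, hv⟩ := hπ (e (Submodule.mkQ _ x))
    have h1 : Submodule.mkQ (m • (⊤ : Submodule R M)) (x - φ v) = 0 := by
      rw [map_sub, hφ', hv, e.symm_apply_apply, sub_self]
    rw [Submodule.mkQ_apply, Submodule.Quotient.mk_eq_zero] at h1
    rw [← add_sub_cancel (φ v) x]
    exact Submodule.add_mem_sup ⟨v, rfl⟩ h1
  · intro v
    rw [← Submodule.Quotient.mk_eq_zero, ← Submodule.mkQ_apply, hφ', LinearEquiv.map_eq_zero_iff,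
      funext_iff]
    refine forall_congr' fun i => ?_
    exact Ideal.Quotient.eq_zero_iff_mem

/-- Key count -/
lemma count (R : Type) [CommRing R] [IsNoetherianRing R] [IsLocalRing R] (M : Type)
    [AddCommGroup M] [Module R M] [Module.Finite R M] (hE : ExtendProp R M) :
    ∃ t : ℕ∞, 
     Module.length R (M ⧸ (IsLocalRing.maximalIdeal R • (⊤ : Submodule R M))) * Module.length R R =
      Module.length R (Module.Dual R M) + t ∧
     Module.length R (M ⧸ (IsLocalRing.maximalIdeal R • (⊤ : Submodule R M))) *
      Module.length R (IsLocalRing.maximalIdeal R →ₗ[R] R) =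
     Module.length R (↥(IsLocalRing.maximalIdeal R • (⊤ : Submodule R M)) →ₗ[R] R) + t := by
  obtain ⟨b, φ, hb, hs, hφ⟩ := min_cover R M
  set m := IsLocalRing.maximalIdeal R with hm
  refine ⟨Module.length R (LinearMap.ker φ →ₗ[R] R), ?_, ?_⟩
  · rw [hb, ← length_restrict R _ _ φ hs (hE _ φ hs), length_pi_hom,
      (LinearMap.ringLmapEquivSelf R R R).length_eq]
  · let inc : (Fin b → m) →ₗ[R] (Fin b → R) := LinearMap.compLeft m.subtype (Fin b)
    let ψ : (Fin b → m) →ₗ[R] ↥(m • (⊤ : Submodule R M)) := (φ ∘ₗ inc).codRestrict _ (by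
      intro v
      exact (hφ _).2 (fun i => (v i).2))
    have hψ : Function.Surjective ψ := by
      rintro ⟨y, hy⟩
      obtain ⟨v, rfl⟩ := hs y
      exact ⟨fun i => ⟨v i, (hφ v).1 hy i⟩, rfl⟩
    let e : LinearMap.ker ψ ≃ₗ[R] LinearMap.ker φ := by
      refine LinearEquiv.ofBijective ((inc ∘ₗ (LinearMap.ker ψ).subtype).codRestrict _ ?_) ⟨?_, ?_⟩
      · rintro ⟨v, hv⟩
        exact congrArg Subtype.val hv
      · intro v w hvw
        ext i
        exact congrFun (congrArg Subtype.val hvw) i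
      · rintro ⟨v, hv⟩
        have hv' : φ v = 0 := hv
        have hvm : ∀ i, v i ∈ m := (hφ v).1 (by rw [hv']; exact zero_mem _)
        exact ⟨⟨fun i => ⟨v i, hvm i⟩, Subtype.ext hv⟩, rfl⟩
    have he : ∀ x, ((e x : Fin b → R)) = inc x := fun x => rfl
    rw [hb, ← (e.congrLeft R R).length_eq, ← length_restrict R _ _ ψ hψ, length_pi_hom]
    intro f
    obtain ⟨g, hg⟩ := hE _ φ hs (f ∘ₗ e.symm.toLinearMap)
    refine ⟨g ∘ₗ inc, fun x => ?_⟩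
    have := hg (e x)
    rw [he] at this
    simpa using this

/-- socle of dual -/
lemma length_soc_dual (R : Type) [CommRing R] [IsLocalRing R] (M : Type)
    [AddCommGroup M] [Module R M] [Module.Finite R M]
    (N : Submodule R (Module.Dual R M)) (hN : ∀ f, f ∈ N ↔ ∀ a ∈ IsLocalRing.maximalIdeal R, a • f = 0) :
    Module.length R N =
     Module.length R (M ⧸ (IsLocalRing.maximalIdeal R • (⊤ : Submodule R M))) *
     Module.length R ((R ⧸ IsLocalRing.maximalIdeal R) →ₗ[R] R) := by
  set m := IsLocalRing.maximalIdeal R with hm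
  rw [← length_hom_k]
  · let L : ((M ⧸ (m • (⊤ : Submodule R M))) →ₗ[R] R) →ₗ[R] Module.Dual R M :=
      LinearMap.lcomp R R (Submodule.mkQ _)
    have hL : Function.Injective L := by
      intro f g h
      ext x
      exact LinearMap.congr_fun h x
    have : N = LinearMap.range L := by
      ext f
      rw [hN]
      constructor
      · intro h
        refine ⟨Submodule.liftQ _ f ?_, by ext; rfl⟩
        rw [Submodule.smul_le]
        intro a ha x _
        rw [LinearMap.mem_ker, map_smul]
        exact LinearMap.congr_fun (h a ha) x
      · rintro ⟨g, rfl⟩ a ha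
        ext x
        show a • g (Submodule.mkQ _ x) = 0
        rw [← map_smul, ← map_smul]
        convert map_zero g
        rw [Submodule.mkQ_apply, Submodule.Quotient.mk_eq_zero]
        exact Submodule.smul_mem_smul ha trivial
    rw [this]
    exact (LinearEquiv.ofInjective L hL).symm.length_eq
  · intro a ha v
    obtain ⟨v, rfl⟩ := Submodule.mkQ_surjective _ v
    rw [← map_smul, Submodule.mkQ_apply, Submodule.Quotient.mk_eq_zero]
    exact Submodule.smul_mem_smul ha trivial

lemma max_extend_of_length (R : Type) [CommRing R] [IsArtinianRing R] [IsLocalRing R]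
    [Module.Finite R (IsLocalRing.maximalIdeal R →ₗ[R] R)]
    (h : Module.length R R = Module.length R ((R ⧸ IsLocalRing.maximalIdeal R) →ₗ[R] R) +
      Module.length R (IsLocalRing.maximalIdeal R →ₗ[R] R)) :
    ∀ f : IsLocalRing.maximalIdeal R →ₗ[R] R, ∃ g : R →ₗ[R] R,
      ∀ x : IsLocalRing.maximalIdeal R, g x = f x := by
  set m := IsLocalRing.maximalIdeal R with hm
  let L : (R →ₗ[R] R) →ₗ[R] (m →ₗ[R] R) := LinearMap.lcomp R R m.subtype
  have h1 : Module.length R (R →ₗ[R] R) = Module.length R ((R ⧸ m) →ₗ[R] R) +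
      Module.length R (LinearMap.range L) := by
    refine Module.length_eq_add_of_exact (LinearMap.lcomp R R (Submodule.mkQ m))
      L.rangeRestrict ?_ ?_ ?_
    · intro f g hfg
      ext
      exact LinearMap.congr_fun hfg 1
    · exact LinearMap.surjective_rangeRestrict L
    · intro f
      constructor
      · intro hf
        have hf : L f = 0 := congrArg Subtype.val hf
        exact ⟨Submodule.liftQ m f fun x hx => LinearMap.congr_fun hf ⟨x, hx⟩, by ext; rfl⟩
      · rintro ⟨g, rfl⟩
        ext x
        show g (Submodule.mkQ m x) = 0
        have : Submodule.mkQ m (x : R) = 0 := (Submodule.Quotient.mk_eq_zero _).2 x.2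
        rw [this, map_zero]
  rw [(LinearMap.ringLmapEquivSelf R R R).length_eq, h] at h1
  have hr : Module.length R ((R ⧸ m) →ₗ[R] R) ≠ ⊤ := by
    intro htop
    have : Module.length R R = ⊤ := by rw [h, htop, top_add]
    exact Module.length_ne_top this
  have h2 := WithTop.add_left_cancel hr h1
  have h3 : LinearMap.range L = ⊤ := by
    by_contra hne
    exact (Submodule.length_lt hne).ne h2.symm
  intro f
  obtain ⟨g, hg⟩ := LinearMap.range_eq_top.1 h3 f
  exact ⟨g, fun x => LinearMap.congr_fun hg x⟩

lemma finite_hom (R : Type) [CommRing R] [IsNoetherianRing R] (M : Type)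
    [AddCommGroup M] [Module R M] [Module.Finite R M] : Module.Finite R (M →ₗ[R] R) := by
  obtain ⟨n, f, hf⟩ := Module.Finite.exists_fin' R M
  refine Module.Finite.of_injective (LinearMap.lcomp R R f) ?_
  intro g h hgh
  ext x
  obtain ⟨v, rfl⟩ := hf x
  exact LinearMap.congr_fun hgh v

lemma dual_mem_max (R : Type) [CommRing R] [IsLocalRing R] (M : Type)
    [AddCommGroup M] [Module R M] (hind : IsIndecomposableModule R M) (hnf : ¬ Module.Free R M)
    (g : Module.Dual R M) (x : M) : g x ∈ IsLocalRing.maximalIdeal R := by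
  by_contra hu
  have hu : IsUnit (g x) := by simpa using hu
  obtain ⟨u, hu⟩ := hu
  let y : M := (↑u⁻¹ : R) • x
  have hy : g y = 1 := by
    show g ((↑u⁻¹ : R) • x) = 1
    rw [map_smul, ← hu]; simp
  have hc : IsCompl (LinearMap.ker g) (Submodule.span R {y}) := by
    constructor
    · rw [Submodule.disjoint_def]
      intro z hz hz'
      obtain ⟨a, rfl⟩ := Submodule.mem_span_singleton.1 hz'
      rw [LinearMap.mem_ker, map_smul, hy, smul_eq_mul, mul_one] at hz
      rw [hz, zero_smul]
    · rw [codisjoint_iff, eq_top_iff]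
      intro z _
      rw [← sub_add_cancel z (g z • y)]
      refine Submodule.add_mem_sup ?_ (Submodule.smul_mem _ _ (Submodule.mem_span_singleton_self y))
      rw [LinearMap.mem_ker, map_sub, map_smul, hy, smul_eq_mul, mul_one, sub_self]
  rcases hind.2 _ _ hc with h | h
  · apply hnf
    refine Module.Free.of_equiv (LinearEquiv.ofBijective g ⟨LinearMap.ker_eq_bot.1 h, ?_⟩).symm
    intro a
    exact ⟨a • y, by rw [map_smul, hy, smul_eq_mul, mul_one]⟩
  · rw [Submodule.span_singleton_eq_bot] at h
    rw [h, map_zero] at hy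
    exact zero_ne_one hy

lemma arith (b b' r l p t t' : ℕ) (hb : 0 < b) (h1 : b * l = (b' + b * r) + t)
    (h2 : b * p = (b' * r) * r + t) (h3 : b' * l = (b + b' * r) + t')
    (h4 : b' * p = (b * r) * r + t') : (r = 1 → l = 1 + p) ∧ (r ≠ 1 → b = b') := by
  zify at *
  set q : ℤ := p + r - l with hq
  have e1 : (b : ℤ) * q = (r ^ 2 - 1) * b' := by rw [hq]; linear_combination h2 - h1
  have e2 : (b' : ℤ) * q = (r ^ 2 - 1) * b := by rw [hq]; linear_combination h4 - h3
  constructor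
  · rintro hr
    rw [hr] at e1
    have : q = 0 := by
      have h : (b : ℤ) * q = 0 := by rw [e1]; ring
      rcases mul_eq_zero.1 h with h | h
      · omega
      · exact h
    rw [hr] at hq
    linarith
  · intro hr
    have h : ((r : ℤ) - 1) * ((r + 1) * ((b' + b) * (b - b'))) = 0 := by
      linear_combination b' * e1 - b * e2
    have h1 : (r : ℤ) - 1 ≠ 0 := sub_ne_zero.2 hr
    have h2 : (r : ℤ) + 1 ≠ 0 := by positivity
    have h3 : (b' : ℤ) + b ≠ 0 := by positivity
    have := (mul_eq_zero.1 ((mul_eq_zero.1 ((mul_eq_zero.1 h).resolve_left h1)).resolve_left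
      h2)).resolve_left h3
    linarith

/-- if b is the minimal number of generators of M, then
dim_k mM = r·b and ℓ(M) = b(1+r). -/
theorem stmt_7 (R : Type) [CommRing R] [IsNoetherianRing R] [IsLocalRing R]
    (hng : ¬ IsGorensteinLocalRing R)
    (hm3 : (IsLocalRing.maximalIdeal R) ^ 3 = ⊥)
    (hm2 : (IsLocalRing.maximalIdeal R) ^ 2 ≠ ⊥)
    (M : Type) [AddCommGroup M] [Module R M] [Module.Finite R M]
    (hind : IsIndecomposableModule R M) (hnf : ¬ Module.Free R M)
    (hG : GDimZero R M) :
    ∃ r b : ℕ, typeLen R = (r : ℕ∞) ∧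
      mlength R (M ⧸ ((IsLocalRing.maximalIdeal R) • (⊤ : Submodule R M))) = (b : ℕ∞) ∧
      mlength R (↥((IsLocalRing.maximalIdeal R) • (⊤ : Submodule R M))) = ((r * b : ℕ) : ℕ∞) ∧
      mlength R M = ((b * (1 + r) : ℕ) : ℕ∞) := by
  set m := IsLocalRing.maximalIdeal R with hm
  have hart : IsArtinianRing R :=
    (isArtinianRing_iff_isNilpotent_maximalIdeal R).2 ⟨3, hm3⟩
  obtain ⟨hrefl, hext, hext'⟩ := hG
  have hE : ExtendProp R M := fun A _ _ p hp f =>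
    extend_of_ext R M R (hext 1 one_pos) A p hp f
  have hE' : ExtendProp R (Module.Dual R M) := fun A _ _ p hp f =>
    extend_of_ext R (Module.Dual R M) R (hext' 1 one_pos) A p hp f
  have hmax : ¬ (∀ f : m →ₗ[R] R, ∃ g : R →ₗ[R] R, ∀ x : m, g x = f x) := fun h =>
    hng ⟨inferInstance, inferInstance, 0, fun N i hi =>
      ext_zero_of_injective R (baer_of_max R hm3 h).injective N i hi⟩
  have : Module.Finite R (Module.Dual R M) := finite_hom R M
  have : Module.Finite R (Module.Dual R (Module.Dual R M)) := finite_hom R _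
  have : Module.Finite R (m →ₗ[R] R) := finite_hom R _
  have : Module.Finite R ((R ⧸ m) →ₗ[R] R) := finite_hom R _
  have hdm := dual_mem_max R M hind hnf
  have hM2 : ∀ a ∈ m, ∀ c ∈ m, ∀ x : M, a • c • x = 0 := by
    intro a ha c hc x
    apply hrefl.1
    ext g
    rw [Module.Dual.eval_apply, map_smul, map_smul, map_zero, LinearMap.zero_apply, smul_eq_mul,
      smul_eq_mul, ← Ideal.mem_bot, ← hm3, pow_succ', pow_two]
    exact Ideal.mul_mem_mul ha (Ideal.mul_mem_mul hc (hdm g x))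
  have hD2 : ∀ a ∈ m, ∀ c ∈ m, ∀ g : Module.Dual R M, a • c • g = 0 := by
    intro a ha c hc g
    ext x
    rw [LinearMap.smul_apply, LinearMap.smul_apply, ← map_smul, ← map_smul, hM2 a ha c hc,
      map_zero, LinearMap.zero_apply]
  have hkill : ∀ (X : Type) [AddCommGroup X] [Module R X],
      (∀ a ∈ m, ∀ c ∈ m, ∀ x : X, a • c • x = 0) →
      ∀ a ∈ m, ∀ x ∈ m • (⊤ : Submodule R X), a • x = 0 := by
    intro X _ _ h a ha x hx
    refine Submodule.smul_induction_on hx (fun c hc y _ => h a ha c hc y) ?_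
    intro y z hy hz
    rw [smul_add, hy, hz, add_zero]
  have hsocM : ∀ x : M, x ∈ m • (⊤ : Submodule R M) ↔ ∀ a ∈ m, a • x = 0 := fun x =>
    ⟨fun hx a ha => hkill M hM2 a ha x hx, fun hx => by
      by_contra hx'
      exact hmax (max_extend_of_retract R M hE x hx hx')⟩
  have hsocD : ∀ x : Module.Dual R M, x ∈ m • (⊤ : Submodule R (Module.Dual R M)) ↔
      ∀ a ∈ m, a • x = 0 := fun x =>
    ⟨fun hx a ha => hkill _ hD2 a ha x hx, fun hx => by
      by_contra hx'
      exact hmax (max_extend_of_retract R _ hE' x hx hx')⟩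
  let ev : M ≃ₗ[R] Module.Dual R (Module.Dual R M) := LinearEquiv.ofBijective _ hrefl
  have hc' := length_soc_dual R M _ hsocD
  have hc := length_soc_dual R (Module.Dual R M) ((m • (⊤ : Submodule R M)).map ev.toLinearMap) (by
    intro f
    obtain ⟨x, rfl⟩ := ev.surjective f
    rw [Submodule.mem_map_equiv, ev.symm_apply_apply, hsocM]
    refine forall₂_congr fun a _ => ?_
    rw [← map_smul, LinearEquiv.map_eq_zero_iff])
  rw [← (ev.submoduleMap _).length_eq] at hc
  have hadd : ∀ (X : Type) [AddCommGroup X] [Module R X], Module.length R X =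
      Module.length R (X ⧸ (m • (⊤ : Submodule R X))) +
      Module.length R ↥(m • (⊤ : Submodule R X)) := by
    intro X _ _
    rw [add_comm]
    exact Module.length_eq_add_of_exact _ _ (Submodule.subtype_injective _)
      (Submodule.mkQ_surjective _) (LinearMap.exact_subtype_mkQ _)
  obtain ⟨t, h1, h2⟩ := count R M hE
  obtain ⟨t', h3, h4⟩ := count R (Module.Dual R M) hE'
  rw [length_hom_k R _ (fun a ha v => Subtype.ext (hkill M hM2 a ha v.1 v.2)), hc] at h2
  rw [length_hom_k R _ (fun a ha v => Subtype.ext (hkill _ hD2 a ha v.1 v.2)), hc'] at h4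
  rw [hadd (Module.Dual R M), hc'] at h1
  have h5 := hadd M
  rw [← ev.length_eq, h5, hc] at h3
  have fin : ∀ (X : Type) [AddCommGroup X] [Module R X] [Module.Finite R X],
      ∃ n : ℕ, Module.length R X = n := by
    intro X _ _ _
    exact ⟨_, (ENat.natCast_toNat (Module.length_ne_top (R := R) (M := X))).symm⟩
  obtain ⟨r, hr⟩ := fin ((R ⧸ m) →ₗ[R] R)
  obtain ⟨b, hb⟩ := fin (M ⧸ (m • (⊤ : Submodule R M)))
  obtain ⟨b', hb'⟩ := fin (Module.Dual R M ⧸ (m • (⊤ : Submodule R (Module.Dual R M))))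
  obtain ⟨l, hl⟩ := fin R
  obtain ⟨p, hp⟩ := fin (m →ₗ[R] R)
  have hb0 : 0 < b := by
    rcases Nat.eq_zero_or_pos b with h | h
    · exfalso
      rw [h, Nat.cast_zero, Module.length_eq_zero_iff, Submodule.Quotient.subsingleton_iff]
        at hb
      have := Submodule.eq_bot_of_le_smul_of_le_jacobson_bot m (⊤ : Submodule R M)
        Module.Finite.fg_top hb.ge (IsLocalRing.maximalIdeal_le_jacobson _)
      exact hind.1 this.symm
    · exact h
  have hr2 : Module.length R ((R ⧸ IsLocalRing.maximalIdeal R) →ₗ[R] R) = r := hr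
  have hb2 : Module.length R (M ⧸ (IsLocalRing.maximalIdeal R • (⊤ : Submodule R M))) = b := hb
  have hb2' : Module.length R (Module.Dual R M ⧸
    (IsLocalRing.maximalIdeal R • (⊤ : Submodule R (Module.Dual R M)))) = b' := hb'
  have hp2 : Module.length R (IsLocalRing.maximalIdeal R →ₗ[R] R) = p := hp
  simp only [hr2, hb, hb', hb2, hb2', hl, hp2] at h1 h2 h3 h4 hc hc' h5
  have ht : t ≠ ⊤ := by
    rintro rfl
    rw [add_top] at h1
    exact ENat.natCast_ne_top (b * l) (by exact_mod_cast h1)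
  have ht' : t' ≠ ⊤ := by
    rintro rfl
    rw [add_top] at h3
    exact ENat.natCast_ne_top (b' * l) (by exact_mod_cast h3)
  lift t to ℕ using ht
  lift t' to ℕ using ht'
  norm_cast at h1 h2 h3 h4
  obtain ⟨ha1, ha2⟩ := arith b b' r l p t t' hb0 h1 h2 h3 h4
  have hr1 : r ≠ 1 := by
    rintro rfl
    apply hmax
    apply max_extend_of_length
    rw [← hm, hl, hr, hp, ha1 rfl]
    push_cast
    rfl
  obtain rfl := ha2 hr1
  have hlen : ∀ (X : Type) [AddCommGroup X] [Module R X], mlength R X = Module.length R X :=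
    fun X _ _ => (Module.coe_length R X).symm
  refine ⟨r, b, ?_, ?_, ?_, ?_⟩
  · rw [typeLen, hlen, ← hm, hr]
  · rw [hlen, hb]
  · rw [hlen, hc, mul_comm]; norm_cast
  · rw [hlen, h5, hc, mul_add, mul_one]; norm_cast
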